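/- Let a > 4 and f_a(x) = a·x·(1−x). Assume |f_a'(x)| > 1 for every x ∈ [0,1] with f_a(x) ≤ 1. Then the set Λ = {x ∈ [0,1] : for all n ∈ ℕ, f_a^[n](x) ∈ [0,1]} contains no nondegenerate interval; that is, if x, y ∈ ℝ with x < y, then the closed interval [x, y] is not contained in Λ. -/

import Mathlib

/-- The quadratic (logistic) map. -/
def logisticMap (a : ℝ) : ℝ → ℝ := fun x => a * x * (1 - x)

/-- The points of the unit interval whose whole forward orbit stays in the unit interval. -/
def logisticInvariantSet (a : ℝ) : Set ℝ :=
  {z : ℝ | z ∈ Set.Icc (0 : ℝ) 1 ∧ ∀ n : ℕ, (logisticMap a)^[n] z ∈ Set.Icc (0 : ℝ) 1}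

theorem hasDerivAt_logisticMap (a x : ℝ) : HasDerivAt (logisticMap a) (a * (1 - 2 * x)) x := by
  have h := ((hasDerivAt_id' x).const_mul a).mul ((hasDerivAt_id' x).const_sub 1)
  exact h.congr_deriv (by ring)

theorem continuous_logisticMap (a : ℝ) : Continuous (logisticMap a) := by
  unfold logisticMap
  fun_prop

theorem logisticMap_le_one_of_mem_logisticInvariantSet {a x : ℝ}
    (hx : x ∈ logisticInvariantSet a) : logisticMap a x ≤ 1 :=
  (hx.2 1).2

theorem logisticMap_mem_logisticInvariantSet {a x : ℝ} (hx : x ∈ logisticInvariantSet a) :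
    logisticMap a x ∈ logisticInvariantSet a :=
  ⟨hx.2 1, fun n => hx.2 (n + 1)⟩

theorem half_notMem_logisticInvariantSet {a : ℝ} (ha : 4 < a) :
    (1 / 2 : ℝ) ∉ logisticInvariantSet a := by
  intro h
  have h1 := logisticMap_le_one_of_mem_logisticInvariantSet h
  unfold logisticMap at h1
  linarith

/-- Evaluating the derivative condition at a preimage of `1` bounds the parameter. -/
theorem one_lt_of_one_lt_abs_deriv_logisticMap {a : ℝ} (ha : 4 < a)
    (hderiv : ∀ x ∈ Set.Icc (0 : ℝ) 1, logisticMap a x ≤ 1 → 1 < |deriv (logisticMap a) x|) :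
    1 < a ^ 2 - 4 * a := by
  have hmem : (1 : ℝ) ∈ Set.Icc (logisticMap a 0) (logisticMap a (1 / 2)) := by
    constructor <;> unfold logisticMap <;> linarith
  obtain ⟨x, hx, hfx⟩ :=
    intermediate_value_Icc (by norm_num) (continuous_logisticMap a).continuousOn hmem
  have h := hderiv x ⟨hx.1, by linarith [hx.2]⟩ hfx.le
  rw [(hasDerivAt_logisticMap a x).deriv, ← one_lt_sq_iff_one_lt_abs] at h
  unfold logisticMap at hfx
  nlinarith

theorem sqrt_le_abs_deriv_of_logisticMap_le_one {a x : ℝ} (ha : 0 ≤ a)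
    (hx : logisticMap a x ≤ 1) : √(a ^ 2 - 4 * a) ≤ |a * (1 - 2 * x)| := by
  apply Real.sqrt_le_iff.2 ⟨abs_nonneg _, ?_⟩
  rw [sq_abs]
  unfold logisticMap at hx
  nlinarith

/-- The logistic map expands intervals contained in its invariant set. -/
theorem sqrt_mul_abs_sub_le_of_uIcc_subset {a x y : ℝ} (ha : 4 < a)
    (h : Set.uIcc x y ⊆ logisticInvariantSet a) :
    √(a ^ 2 - 4 * a) * |y - x| ≤ |logisticMap a y - logisticMap a x| := by
  have hhalf : (1 / 2 : ℝ) ∉ Set.uIcc x y := fun hm => half_notMem_logisticInvariantSet ha (h hm)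
  have hu := sqrt_le_abs_deriv_of_logisticMap_le_one (by linarith)
    (logisticMap_le_one_of_mem_logisticInvariantSet (h Set.left_mem_uIcc))
  have hv := sqrt_le_abs_deriv_of_logisticMap_le_one (by linarith)
    (logisticMap_le_one_of_mem_logisticInvariantSet (h Set.right_mem_uIcc))
  have hsub : logisticMap a y - logisticMap a x = a * (1 - x - y) * (y - x) := by
    unfold logisticMap
    ring
  rw [hsub, abs_mul]
  refine mul_le_mul_of_nonneg_right ?_ (abs_nonneg _)
  rw [Set.mem_uIcc, not_or, not_and_or, not_and_or] at hhalf
  rcases lt_or_ge x (1 / 2) with hx | hx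
  · have hy : y < 1 / 2 := by
      by_contra! hy
      exact hhalf.1.elim (· hx.le) (· hy)
    rw [abs_of_nonneg (mul_nonneg (by linarith) (by linarith))] at hu hv ⊢
    linarith
  · have hy : 1 / 2 < y := by
      by_contra! hy
      exact hhalf.2.elim (· hy) (· hx)
    rw [abs_of_nonpos (mul_nonpos_of_nonneg_of_nonpos (by linarith) (by linarith))] at hu hv ⊢
    linarith

theorem sqrt_pow_mul_abs_sub_le_one {a : ℝ} (ha : 4 < a) (n : ℕ) {x y : ℝ}
    (h : Set.uIcc x y ⊆ logisticInvariantSet a) : √(a ^ 2 - 4 * a) ^ n * |y - x| ≤ 1 := by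
  induction n generalizing x y with
  | zero =>
    have hx := (h Set.left_mem_uIcc).1
    have hy := (h Set.right_mem_uIcc).1
    rw [pow_zero, one_mul, abs_le]
    constructor <;> linarith [hx.1, hx.2, hy.1, hy.2]
  | succ n ih =>
    have himage : Set.uIcc (logisticMap a x) (logisticMap a y) ⊆ logisticInvariantSet a := by
      refine (intermediate_value_uIcc (continuous_logisticMap a).continuousOn).trans ?_
      rintro _ ⟨z, hz, rfl⟩
      exact logisticMap_mem_logisticInvariantSet (h hz)
    calc √(a ^ 2 - 4 * a) ^ (n + 1) * |y - x|
        = √(a ^ 2 - 4 * a) ^ n * (√(a ^ 2 - 4 * a) * |y - x|) := by ring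
      _ ≤ √(a ^ 2 - 4 * a) ^ n * |logisticMap a y - logisticMap a x| := by
        gcongr
        exact sqrt_mul_abs_sub_le_of_uIcc_subset ha h
      _ ≤ 1 := ih himage

/-- For `a > 4`, if `|f_a'(x)| > 1` for every `x ∈ [0,1]` with `f_a x ≤ 1`, then the set
`Λ = {x ∈ [0,1] : ∀ n, f_a^[n] x ∈ [0,1]}` contains no nondegenerate interval. -/
theorem logistic_invariant_set_totally_disconnected (a : ℝ) (ha : 4 < a)
    (hderiv : ∀ x ∈ Set.Icc (0 : ℝ) 1, logisticMap a x ≤ 1 → 1 < |deriv (logisticMap a) x|) :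
    ∀ x y : ℝ, x < y → ¬ Set.Icc x y ⊆ {z : ℝ | z ∈ Set.Icc (0 : ℝ) 1 ∧ ∀ n : ℕ,
        (logisticMap a)^[n] z ∈ Set.Icc (0 : ℝ) 1} := by
  intro x y hxy hsub
  have hc : 1 < √(a ^ 2 - 4 * a) :=
    Real.lt_sqrt_of_sq_lt (by linarith [one_lt_of_one_lt_abs_deriv_logisticMap ha hderiv])
  have hpos : 0 < y - x := sub_pos.2 hxy
  obtain ⟨n, hn⟩ := pow_unbounded_of_one_lt (1 / (y - x)) hc
  have hle := sqrt_pow_mul_abs_sub_le_one ha n (x := x) (y := y)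
    (by rw [Set.uIcc_of_le hxy.le]; exact hsub)
  rw [abs_of_pos hpos] at hle
  rw [div_lt_iff₀ hpos] at hn
  linarith
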